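/- For every external site x ∈ E, the vector a_x is annihilated by the single-particle Hamiltonian: h a_x = 0. Consequently the kernel of h contains the span of the card E vectors {a_x}, i.e. the single-electron spectrum contains a (card E)-fold degenerate flat band at energy 0. -/

import Mathlib

/-!
The Hamiltonian is a combination of the rank-one maps `v ↦ ⟪b_j, v⟫ b_j` and `v ↦ ⟪d_j, v⟫ d_j`,
so it kills every vector orthogonal to all `b_j` and `d_j`. The vectors `a_x` have this property
(`inner_bvec_avec`, `inner_dvec_avec`), and a kernel containing them contains their span.
-/

open scoped InnerProductSpace

noncomputable section

/-- The lattice `Λ`: two internal sites `(j,0)=u_j`, `(j,1)=v_j` per cell `j ∈ J`,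
together with the external sites `E`. -/
abbrev FBLat (J E : Type*) := (J × Fin 2) ⊕ E

variable {J E : Type*} [Fintype J] [Fintype E] [DecidableEq J] [DecidableEq E]

/-- The standard orthonormal basis vector `e_r` at site `r`. -/
def esite (r : FBLat J E) : EuclideanSpace ℂ (FBLat J E) := EuclideanSpace.single r 1

/-- `a_x = e_x - (ν/2) Σ_{j : x ∈ C j} (e_{u_j} + e_{v_j})`. -/
def avec (C : J → Finset E) (ν : ℝ) (x : E) : EuclideanSpace ℂ (FBLat J E) :=
  esite (Sum.inr x) -
    ((ν : ℂ) / 2) • ∑ j ∈ Finset.univ.filter (fun j => x ∈ C j),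
      (esite (Sum.inl (j, 0)) + esite (Sum.inl (j, 1)))

/-- `b_j = e_{u_j} + e_{v_j} + ν Σ_{x ∈ C j} e_x`. -/
def bvec (C : J → Finset E) (ν : ℝ) (j : J) : EuclideanSpace ℂ (FBLat J E) :=
  esite (Sum.inl (j, 0)) + esite (Sum.inl (j, 1)) +
    (ν : ℂ) • ∑ x ∈ C j, esite (Sum.inr x)

/-- `d_j = e_{u_j} - e_{v_j}`. -/
def dvec (j : J) : EuclideanSpace ℂ (FBLat J E) :=
  esite (Sum.inl (j, 0)) - esite (Sum.inl (j, 1))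

/-- The single-particle Hamiltonian
`h v = t Σ_{j ∈ J} ⟪b_j, v⟫ b_j + s' Σ_{j ∈ J} ⟪d_j, v⟫ d_j`
(the inner product being conjugate-linear in the first argument). -/
def ham (C : J → Finset E) (ν t s' : ℝ) :
    EuclideanSpace ℂ (FBLat J E) →ₗ[ℂ] EuclideanSpace ℂ (FBLat J E) :=
  (t : ℂ) • ∑ j, (innerₛₗ ℂ (bvec C ν j)).smulRight (bvec C ν j) +
    (s' : ℂ) • ∑ j, (innerₛₗ ℂ (dvec (E := E) j)).smulRight (dvec (E := E) j)

/-- The `E`-part of `b_j` contributes `ν` to `⟪b_j, a_x⟫` exactly when `x ∈ C j`; in that case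
cell `j` occurs in `a_x` and its two internal sites contribute `-(ν/2) * 2`. -/
lemma inner_bvec_avec (C : J → Finset E) (ν : ℝ) (j : J) (x : E) :
    ⟪bvec C ν j, avec C ν x⟫_ℂ = 0 := by
  by_cases h : x ∈ C j <;>
    simp [bvec, avec, esite, Finset.sum_add_distrib, EuclideanSpace.inner_single_left, h]

/-- Each `a_x` is symmetric under exchanging `u_j` and `v_j`, while `d_j` is antisymmetric. -/
lemma inner_dvec_avec (C : J → Finset E) (ν : ℝ) (j : J) (x : E) :
    ⟪dvec (E := E) j, avec C ν x⟫_ℂ = 0 := by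
  simp [dvec, avec, esite, Finset.sum_add_distrib, EuclideanSpace.inner_single_left]

theorem ham_annihilates_avec
    (n m : ℕ) (hn : 0 < n) (hm : 0 < m) (C : J → Finset E) (ν : ℝ) (hν : 0 < ν)
    (hCn : ∀ j : J, (C j).card = n)
    (hCm : ∀ x : E, (Finset.univ.filter (fun j => x ∈ C j)).card = m)
    (t s' : ℝ)
    : (∀ x : E, ham C ν t s' (avec C ν x) = 0) ∧
    Submodule.span ℂ (Set.range (avec C ν)) ≤ LinearMap.ker (ham C ν t s') := by
  have key : ∀ x : E, ham C ν t s' (avec C ν x) = 0 := fun x => by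
    simp [ham, inner_bvec_avec, inner_dvec_avec]
  refine ⟨key, Submodule.span_le.2 ?_⟩
  rintro _ ⟨x, rfl⟩
  exact key x
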